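/- Let $T$ be a bounded linear operator on a complex Banach space $B$ and $(f_j)_{j\in\mathbb Z}$ a bilateral sequence of elements of $B$ such that $\operatorname{span}\{f_j : j\in\mathbb Z\}$ is dense in $B$ and $Tf_j=f_{j+1}$ for every $j\in\mathbb Z$. A vector $x\in B$ is called cyclic for $T$ if $\operatorname{span}\{T^m x : m\ge 0\}$ is dense in $B$. Consider the following condition. (A) For all positive integers $n,k$ with $n>k$ and every $\varepsilon>0$ there exist a complex polynomial $r$ and $u\in B$ such that $\|f_{-k}-u\|\le\varepsilon$ and $\|f_{-n}-r(T)u\|\le\varepsilon$. If the set of cyclic vectors for $T$ is dense in $B$, then (A) holds. If, moreover, the point spectrum $\sigma_p(T^*)$ (the set of eigenvalues of the dual operator $T^*:B^*\to B^*$, $T^*\varphi=\varphi\circ T$) has empty interior in $\mathbb C$, then conversely (A) implies density; that is, the set of cyclic vectors for $T$ is dense in $B$ if and only if (A) holds. -/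

import Mathlib

/-- `x` is a *cyclic vector* for `T`: `span {T^n x : n ≥ 0}` is dense. -/
def CyclicVector {X : Type*} [NormedAddCommGroup X] [NormedSpace ℂ X]
    (T : X →L[ℂ] X) (x : X) : Prop :=
  Dense (↑(Submodule.span ℂ (Set.range fun n : ℕ => (T ^ n) x)) : Set X)

/-- The dual operator `T* : X* → X*`, `T* φ = φ ∘ T`, on the space of continuous linear
functionals. -/
noncomputable def dualOperator {X : Type*} [NormedAddCommGroup X] [NormedSpace ℂ X]
    (T : X →L[ℂ] X) : (X →L[ℂ] ℂ) →L[ℂ] (X →L[ℂ] ℂ) :=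
  ContinuousLinearMap.precomp ℂ T

/-- The point spectrum of an operator: the set of its eigenvalues. -/
def pointSpectrum {X : Type*} [NormedAddCommGroup X] [NormedSpace ℂ X]
    (T : X →L[ℂ] X) : Set ℂ :=
  {μ : ℂ | Module.End.HasEigenvalue (T : X →ₗ[ℂ] X) μ}

/-- For all positive integers `n > k` and every `ε > 0` there are a polynomial `r` and a vector
`u` with `‖f_{-k} - u‖ ≤ ε` and `‖f_{-n} - r(T) u‖ ≤ ε`. -/
def BackwardApproximable {X : Type*} [NormedAddCommGroup X] [NormedSpace ℂ X]
    (T : X →L[ℂ] X) (f : ℤ → X) : Prop :=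
  ∀ n k : ℕ, 1 ≤ k → k < n → ∀ ε > (0 : ℝ), ∃ (r : Polynomial ℂ) (u : X),
    ‖f (-(k : ℤ)) - u‖ ≤ ε ∧ ‖f (-(n : ℤ)) - (Polynomial.aeval T r) u‖ ≤ ε

open Polynomial

/-- The linear span of the orbit of `x` under `T` consists of the vectors `r(T) x`. -/
theorem mem_span_orbit_iff {X : Type*} [NormedAddCommGroup X] [NormedSpace ℂ X]
    (T : X →L[ℂ] X) (x y : X) :
    y ∈ Submodule.span ℂ (Set.range fun n : ℕ => (T ^ n) x) ↔ ∃ r : ℂ[X], aeval T r x = y := by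
  constructor
  · intro hy
    induction hy using Submodule.span_induction with
    | mem y hy =>
      obtain ⟨n, rfl⟩ := hy
      exact ⟨Polynomial.X ^ n, by simp⟩
    | zero => exact ⟨0, by simp⟩
    | add y z _ _ hy hz =>
      obtain ⟨r, rfl⟩ := hy
      obtain ⟨s, rfl⟩ := hz
      exact ⟨r + s, by simp⟩
    | smul a y _ hy =>
      obtain ⟨r, rfl⟩ := hy
      exact ⟨a • r, by simp⟩
  · rintro ⟨r, rfl⟩
    induction r using Polynomial.induction_on' with
    | add p q hp hq => simpa using add_mem hp hq
    | monomial n a =>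
      rw [aeval_monomial, ← Algebra.smul_def]
      exact Submodule.smul_mem _ a (Submodule.subset_span ⟨n, rfl⟩)

theorem cyclicVector_iff_denseRange {X : Type*} [NormedAddCommGroup X] [NormedSpace ℂ X]
    (T : X →L[ℂ] X) (x : X) :
    CyclicVector T x ↔ DenseRange fun r : ℂ[X] => aeval T r x := by
  rw [CyclicVector, DenseRange]
  congr! 1
  ext y
  exact mem_span_orbit_iff T x y

/-- A submodule annihilated only by the zero functional is dense. -/
theorem Submodule.dense_of_forall_dual_eq_zero {X : Type*} [NormedAddCommGroup X]
    [NormedSpace ℂ X] (p : Submodule ℂ X)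
    (h : ∀ φ : X →L[ℂ] ℂ, (∀ y ∈ p, φ y = 0) → φ = 0) : Dense (p : Set X) := by
  rw [Submodule.dense_iff_topologicalClosure_eq_top, Submodule.eq_top_iff']
  intro x
  by_contra hx
  have : IsClosed (p.topologicalClosure : Set X) := p.isClosed_topologicalClosure
  have hq : (Submodule.Quotient.mk x : X ⧸ p.topologicalClosure) ≠ 0 := by
    rwa [Ne, Submodule.Quotient.mk_eq_zero]
  obtain ⟨g, -, hg⟩ := exists_dual_vector ℂ (Submodule.Quotient.mk x : X ⧸ p.topologicalClosure)
    (norm_ne_zero_iff.2 hq)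
  have hφ := h (g.comp p.topologicalClosure.mkQL) fun y hy => by
    have : (Submodule.Quotient.mk y : X ⧸ p.topologicalClosure) = 0 :=
      (Submodule.Quotient.mk_eq_zero _).2 (p.le_topologicalClosure hy)
    simp [this]
  have hx0 : g (Submodule.Quotient.mk x) = 0 := DFunLike.congr_fun hφ x
  rw [hx0] at hg
  exact hq (norm_eq_zero.1 (Complex.ofReal_eq_zero.1 hg.symm))

/-- If `μ` is not an eigenvalue of the dual operator, then `T - μ` has dense range. -/
theorem denseRange_sub_algebraMap_of_notMem_pointSpectrum {X : Type*} [NormedAddCommGroup X]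
    [NormedSpace ℂ X] (T : X →L[ℂ] X) {μ : ℂ} (hμ : μ ∉ pointSpectrum (dualOperator T)) :
    DenseRange (T - algebraMap ℂ (X →L[ℂ] X) μ) := by
  have key := Submodule.dense_of_forall_dual_eq_zero
    (LinearMap.range (T - algebraMap ℂ (X →L[ℂ] X) μ : X →L[ℂ] X).toLinearMap) ?_
  · exact key
  intro φ hφ
  by_contra hne
  refine hμ (Module.End.hasEigenvalue_of_hasEigenvector (x := φ)
    ⟨Module.End.mem_eigenspace_iff.2 ?_, hne⟩)
  ext x
  have := hφ _ ⟨x, rfl⟩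
  simp only [ContinuousLinearMap.coe_coe, sub_apply, map_sub, sub_eq_zero,
    Algebra.algebraMap_eq_smul_one, smul_apply, map_smul,
    one_apply_eq_self] at this
  exact this

/-- The operators `p(T)` with dense range, for `p` a polynomial, as a submonoid. -/
def densePolynomialSubmonoid {X : Type*} [NormedAddCommGroup X] [NormedSpace ℂ X]
    (T : X →L[ℂ] X) : Submonoid (X →L[ℂ] X) where
  carrier := {A | DenseRange A ∧ ∃ p : ℂ[X], aeval T p = A}
  one_mem' := ⟨denseRange_id, 1, by simp⟩
  mul_mem' := by
    rintro A C ⟨hA, p, rfl⟩ ⟨hC, q, rfl⟩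
    exact ⟨hA.comp hC (ContinuousLinearMap.continuous _), p * q, map_mul _ _ _⟩

/-- If the point spectrum of the dual operator has empty interior, every `p(T)` is a norm limit
of operators `q(T)` with dense range. -/
theorem aeval_mem_topologicalClosure_densePolynomialSubmonoid {X : Type*}
    [NormedAddCommGroup X] [NormedSpace ℂ X] (T : X →L[ℂ] X)
    (hT : interior (pointSpectrum (dualOperator T)) = ∅) (p : ℂ[X]) :
    aeval T p ∈ (densePolynomialSubmonoid T).topologicalClosure := by
  have hcont : Continuous (algebraMap ℂ (X →L[ℂ] X)) := continuous_algebraMap ℂ _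
  have hconst (a : ℂ) : algebraMap ℂ (X →L[ℂ] X) a ∈
      (densePolynomialSubmonoid T).topologicalClosure := by
    refine map_mem_closure hcont (dense_compl_singleton (0 : ℂ) a) fun b hb => ⟨?_, C b, by simp⟩
    refine Function.Surjective.denseRange fun y => ⟨b⁻¹ • y, ?_⟩
    rw [Algebra.algebraMap_eq_smul_one]
    exact smul_inv_smul₀ hb y
  have hlin (μ : ℂ) : T - algebraMap ℂ (X →L[ℂ] X) μ ∈
      (densePolynomialSubmonoid T).topologicalClosure :=
    map_mem_closure (f := fun ν => T - algebraMap ℂ (X →L[ℂ] X) ν)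
      (Continuous.sub continuous_const hcont) (interior_eq_empty_iff_dense_compl.1 hT μ)
      fun ν hν => ⟨denseRange_sub_algebraMap_of_notMem_pointSpectrum T hν,
        Polynomial.X - C ν, by simp⟩
  have hroots (s : Multiset ℂ) : aeval T (s.map fun a => Polynomial.X - C a).prod ∈
      (densePolynomialSubmonoid T).topologicalClosure := by
    induction s using Multiset.induction_on with
    | empty => simp
    | cons a s ih =>
      rw [Multiset.map_cons, Multiset.prod_cons, map_mul]
      exact mul_mem (by simpa using hlin a) ih
  rw [(IsAlgClosed.splits p).eq_prod_roots, map_mul, aeval_C]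
  exact mul_mem (hconst _) (hroots _)

section ShiftedSequence

variable {B : Type*} [NormedAddCommGroup B] [NormedSpace ℂ B] {T : B →L[ℂ] B} {f : ℤ → B}

theorem pow_apply_shifted (hshift : ∀ j : ℤ, T (f j) = f (j + 1)) (n : ℕ) (j : ℤ) :
    (T ^ n) (f j) = f (j + n) := by
  induction n with
  | zero => simp
  | succ n ih =>
    rw [pow_succ', mul_apply_eq_comp, ih, hshift]
    push_cast
    rw [add_assoc]

/-- Each vector in the span of the sequence has the form `p(T) f_{-k}` for all large `k`. -/
theorem exists_aeval_eq_of_mem_span (hshift : ∀ j : ℤ, T (f j) = f (j + 1)) {x : B}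
    (hx : x ∈ Submodule.span ℂ (Set.range f)) :
    ∃ K : ℕ, ∀ k ≥ K, ∃ p : ℂ[X], aeval T p (f (-(k : ℤ))) = x := by
  induction hx using Submodule.span_induction with
  | mem x hx =>
    obtain ⟨j, rfl⟩ := hx
    refine ⟨j.natAbs, fun k hk => ⟨Polynomial.X ^ (j + k).toNat, ?_⟩⟩
    rw [map_pow, aeval_X, pow_apply_shifted hshift]
    congr 1
    omega
  | zero => exact ⟨0, fun k _ => ⟨0, by simp⟩⟩
  | add x y _ _ hx hy =>
    obtain ⟨K, hK⟩ := hx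
    obtain ⟨L, hL⟩ := hy
    refine ⟨max K L, fun k hk => ?_⟩
    obtain ⟨p, hp⟩ := hK k (le_of_max_le_left hk)
    obtain ⟨q, hq⟩ := hL k (le_of_max_le_right hk)
    exact ⟨p + q, by simp [hp, hq]⟩
  | smul a x _ hx =>
    obtain ⟨K, hK⟩ := hx
    refine ⟨K, fun k hk => ?_⟩
    obtain ⟨p, hp⟩ := hK k hk
    exact ⟨a • p, by simp [hp]⟩

theorem BackwardApproximable.exists_mem_open (h : BackwardApproximable T f) {n k : ℕ}
    (hk : 1 ≤ k) (hkn : k < n) {U V : Set B} (hU : IsOpen U) (hV : IsOpen V)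
    (hfU : f (-(k : ℤ)) ∈ U) (hfV : f (-(n : ℤ)) ∈ V) :
    ∃ (r : ℂ[X]) (u : B), u ∈ U ∧ aeval T r u ∈ V := by
  obtain ⟨ε, hε, hεU⟩ := Metric.isOpen_iff.1 hU _ hfU
  obtain ⟨δ, hδ, hδV⟩ := Metric.isOpen_iff.1 hV _ hfV
  obtain ⟨r, u, hu, hr⟩ := h n k hk hkn (min ε δ / 2) (by positivity)
  have hlt : min ε δ / 2 < min ε δ := half_lt_self (by positivity)
  refine ⟨r, u, hεU ?_, hδV ?_⟩
  · rw [mem_ball_iff_norm']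
    exact hu.trans_lt (hlt.trans_le (min_le_left _ _))
  · rw [mem_ball_iff_norm']
    exact hr.trans_lt (hlt.trans_le (min_le_right _ _))

/-- The vectors whose polynomial orbit meets a given nonempty open set form a dense set. -/
theorem BackwardApproximable.dense_setOf_exists_aeval_mem (h : BackwardApproximable T f)
    (hdense : Dense (↑(Submodule.span ℂ (Set.range f)) : Set B))
    (hshift : ∀ j : ℤ, T (f j) = f (j + 1))
    (hT : interior (pointSpectrum (dualOperator T)) = ∅) {V : Set B} (hV : IsOpen V)
    (hVne : V.Nonempty) : Dense {x : B | ∃ r : ℂ[X], aeval T r x ∈ V} := by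
  refine dense_iff_inter_open.2 fun W hW hWne => ?_
  obtain ⟨g, hgW, hg⟩ := hdense.inter_open_nonempty W hW hWne
  obtain ⟨K, hK⟩ := exists_aeval_eq_of_mem_span hshift hg
  obtain ⟨p, hp⟩ := hK (K + 1) (Nat.le_succ K)
  obtain ⟨_, hqW, hq, q, rfl⟩ := mem_closure_iff.1
    (aeval_mem_topologicalClosure_densePolynomialSubmonoid T hT p)
    {A : B →L[ℂ] B | A (f (-((K + 1 : ℕ) : ℤ))) ∈ W}
    (hW.preimage (ContinuousLinearMap.apply ℂ B _).continuous) (by rwa [Set.mem_ofPred_eq, hp])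
  have hqc : Continuous (aeval T q) := ContinuousLinearMap.continuous _
  obtain ⟨_, hwV, w, hw, rfl⟩ :=
    (hq.dense_image hqc hdense).inter_open_nonempty V hV hVne
  obtain ⟨L, hL⟩ := exists_aeval_eq_of_mem_span hshift hw
  obtain ⟨s, hs⟩ := hL (max L (K + 2)) (le_max_left _ _)
  obtain ⟨r, u, huW, huV⟩ := h.exists_mem_open (n := max L (K + 2)) (k := K + 1) (by omega)
    (by omega) (hW.preimage hqc) (hV.preimage (aeval T (q * s)).continuous) hqW
    (by rw [Set.mem_preimage, map_mul, mul_apply_eq_comp, hs]; exact hwV)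
  refine ⟨aeval T q u, huW, s * r, ?_⟩
  rw [Set.mem_preimage, ← mul_apply_eq_comp, ← map_mul] at huV
  rw [← mul_apply_eq_comp, ← map_mul]
  convert huV using 3
  ring

theorem BackwardApproximable.dense_cyclicVectors [CompleteSpace B]
    (h : BackwardApproximable T f)
    (hdense : Dense (↑(Submodule.span ℂ (Set.range f)) : Set B))
    (hshift : ∀ j : ℤ, T (f j) = f (j + 1))
    (hT : interior (pointSpectrum (dualOperator T)) = ∅) : Dense {x : B | CyclicVector T x} := by
  let O : ℤ × ℕ → Set B := fun i =>
    {x | ∃ r : ℂ[X], aeval T r x ∈ Metric.ball (f i.1) (1 / ((i.2 : ℝ) + 1))}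
  have hO : Dense (⋂ i, O i) := by
    refine dense_iInter_of_isOpen (fun i => ?_) fun i =>
      h.dense_setOf_exists_aeval_mem hdense hshift hT Metric.isOpen_ball
        ⟨f i.1, Metric.mem_ball_self Nat.one_div_pos_of_nat⟩
    simp only [O, Set.ofPred_exists]
    exact isOpen_iUnion fun r => Metric.isOpen_ball.preimage (aeval T r).continuous
  refine hO.mono fun x hx => ?_
  rw [Set.mem_ofPred_eq, CyclicVector, ← dense_closure, ← Submodule.topologicalClosure_coe]
  refine hdense.mono (Submodule.span_le.2 ?_)
  rintro _ ⟨j, rfl⟩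
  refine Metric.mem_closure_iff.2 fun ε hε => ?_
  obtain ⟨m, hm⟩ := exists_nat_one_div_lt hε
  obtain ⟨r, hr⟩ := Set.mem_iInter.1 hx (j, m)
  exact ⟨_, (mem_span_orbit_iff T x _).2 ⟨r, rfl⟩, (Metric.mem_ball'.1 hr).trans hm⟩

theorem backwardApproximable_of_dense_cyclicVectors (f : ℤ → B)
    (h : Dense {x : B | CyclicVector T x}) : BackwardApproximable T f := by
  intro n k _ _ ε hε
  obtain ⟨u, hu, hku⟩ := h.exists_dist_lt (f (-(k : ℤ))) hε
  obtain ⟨r, hr⟩ := ((cyclicVector_iff_denseRange T u).1 hu).exists_dist_lt (f (-(n : ℤ))) hε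
  rw [dist_eq_norm] at hku hr
  exact ⟨r, u, hku.le, hr.le⟩

end ShiftedSequence

/-- Let `(f_j)_{j ∈ ℤ}` have dense span in a Banach space and `T f_j = f_{j+1}`. If the cyclic
vectors of `T` are dense, then the approximation condition holds; and if the point spectrum of
the dual operator `T*` has empty interior, then the two are equivalent. -/
theorem dense_cyclicVectors_iff_of_shifted_sequence
    {B : Type*} [NormedAddCommGroup B] [NormedSpace ℂ B] [CompleteSpace B]
    (T : B →L[ℂ] B) (f : ℤ → B)
    (hdense : Dense (↑(Submodule.span ℂ (Set.range f)) : Set B))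
    (hshift : ∀ j : ℤ, T (f j) = f (j + 1)) :
    (Dense {x : B | CyclicVector T x} → BackwardApproximable T f) ∧
      (interior (pointSpectrum (dualOperator T)) = ∅ →
        (Dense {x : B | CyclicVector T x} ↔ BackwardApproximable T f)) := by
  exact ⟨backwardApproximable_of_dense_cyclicVectors f, fun hT =>
    ⟨backwardApproximable_of_dense_cyclicVectors f,
      fun h => h.dense_cyclicVectors hdense hshift hT⟩⟩
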